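/- Let χ : ℝ² → ℝ be continuously differentiable with compact support. There exists a constant C depending only on χ such that for every Schwartz function h : ℝ² → ℂ with Fourier transform ĥ, the function η(y,z) = ∫_{ℝ²} e^{2πi y·ξ} χ(zξ) ĥ(ξ) dξ, defined for y ∈ ℝ² and z < 0, satisfies ∫_{ℝ²} ∫_{−∞}^{0} ( |∂₁η|² + |∂₂η|² + |∂_zη|² ) dz dy ≤ C ∫_{ℝ²} (1+|ξ|²)^{1/2} |ĥ(ξ)|² dξ. -/

import Mathlib

open MeasureTheory

/-- Fourier transform on `ℝ²`: `ĥ(ξ) = ∫_{ℝ²} e^{−2πi y·ξ} h(y) dy`. -/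
noncomputable def fourier2 (h : (Fin 2 → ℝ) → ℂ) (ξ : Fin 2 → ℝ) : ℂ :=
  ∫ y : Fin 2 → ℝ,
    Complex.exp (-((2 * Real.pi * ∑ i : Fin 2, y i * ξ i : ℝ) : ℂ) * Complex.I) * h y

/-- The smoothing extension `η(y,z) = ∫_{ℝ²} e^{2πi y·ξ} χ(zξ) ĥ(ξ) dξ` of `h` to the lower
half-space. -/
noncomputable def smoothExt (χ : (Fin 2 → ℝ) → ℝ) (h : (Fin 2 → ℝ) → ℂ)
    (p : (Fin 2 → ℝ) × ℝ) : ℂ :=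
  ∫ ξ : Fin 2 → ℝ,
    Complex.exp (((2 * Real.pi * ∑ i : Fin 2, p.1 i * ξ i : ℝ) : ℂ) * Complex.I)
      * (χ (p.2 • ξ) : ℂ) * fourier2 h ξ


open scoped FourierTransform ENNReal SchwartzMap ContDiff
open Real

lemma aux_plancherel (g : EuclideanSpace ℝ (Fin 2) → ℂ) (hg : Integrable g)
    (hg2 : MemLp g 2) : ∫⁻ w, ‖𝓕 g w‖ₑ ^ 2 = ∫⁻ w, ‖g w‖ₑ ^ 2 := by
  set f : Lp ℂ 2 (volume : Measure (EuclideanSpace ℝ (Fin 2))) := hg2.toLp g with hf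
  have hcont : Continuous (𝓕 g) := VectorFourier.fourierIntegral_continuous
    Real.continuous_fourierChar continuous_inner hg
  have key : ∀ᵐ x, (𝓕 f : Lp ℂ 2 (volume : Measure (EuclideanSpace ℝ (Fin 2)))) x = 𝓕 g x := by
    apply ae_eq_of_integral_contDiff_smul_eq
    · exact (Lp.memLp _).locallyIntegrable (by norm_num)
    · exact hcont.locallyIntegrable
    · intro φ hφ hφs
      have h1 : HasCompactSupport (fun x => (φ x : ℂ)) := hφs.comp_left (g := Complex.ofReal) rfl
      have h2 : ContDiff ℝ ∞ (fun x => (φ x : ℂ)) := Complex.ofRealCLM.contDiff.comp hφ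
      set ψ : 𝓢(EuclideanSpace ℝ (Fin 2), ℂ) := h1.toSchwartzMap h2 with hψ
      have e1 := congrArg (fun T => T ψ) (MeasureTheory.Lp.fourier_toTemperedDistribution_eq f)
      simp only [TemperedDistribution.fourier_apply, Lp.toTemperedDistribution_apply] at e1
      have e2 : ∫ x, (𝓕 ψ) x • f x = ∫ x, (𝓕 ψ) x • g x := by
        apply integral_congr_ae
        filter_upwards [hg2.coeFn_toLp] with x hx
        rw [hf, hx]
      have e3 : ∫ x, (𝓕 ψ) x • g x = ∫ x, ψ x • 𝓕 g x := by
        have := (VectorFourier.integral_fourierIntegral_smul_eq_flip (L := innerₗ (EuclideanSpace ℝ (Fin 2)))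
          Real.continuous_fourierChar continuous_inner (ψ.integrable (μ := volume)) hg)
        simpa using! this
      have e4 := e1.symm.trans (e2.trans e3)
      simpa [hψ] using! e4
  have n1 : ‖(𝓕 f : Lp ℂ 2 (volume : Measure (EuclideanSpace ℝ (Fin 2))))‖ₑ = ‖f‖ₑ := by
    rw [← ofReal_norm, ← ofReal_norm, MeasureTheory.Lp.norm_fourier_eq]
  have n2 := congrArg (fun t => t ^ (2:ℝ)) n1
  simp only [Lp.enorm_def] at n2
  have h2 : ∀ u : EuclideanSpace ℝ (Fin 2) → ℂ, (eLpNorm u 2 volume) ^ (2:ℝ) = ∫⁻ w, ‖u w‖ₑ ^ 2 := by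
    intro u
    rw [eLpNorm_eq_lintegral_rpow_enorm_toReal (by norm_num) (by norm_num), ← ENNReal.rpow_mul]
    simp
  rw [h2, h2] at n2
  calc _ = _ := by
        apply lintegral_congr_ae
        filter_upwards [key] with x hx
        rw [← hx]
    _ = _ := n2
    _ = _ := by
        apply lintegral_congr_ae
        filter_upwards [hg2.coeFn_toLp] with x hx
        rw [hf, hx]

lemma aux_plancherel2 (g : (Fin 2 → ℝ) → ℂ) (hg : Integrable g) (hg2 : MemLp g 2) :
    ∫⁻ y : Fin 2 → ℝ, ‖∫ ξ : Fin 2 → ℝ,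
      Complex.exp (((2 * Real.pi * ∑ i : Fin 2, y i * ξ i : ℝ) : ℂ) * Complex.I) * g ξ‖ₑ ^ 2
      = ∫⁻ ξ, ‖g ξ‖ₑ ^ 2 := by
  have mp := PiLp.volume_preserving_ofLp (Fin 2)
  have emb := (MeasurableEquiv.toLp 2 (Fin 2 → ℝ)).symm.measurableEmbedding
  have P := aux_plancherel (fun x => g x.ofLp) (mp.integrable_comp_of_integrable hg)
    (hg2.comp_measurePreserving mp)
  have R : ∫⁻ w : EuclideanSpace ℝ (Fin 2), ‖g w.ofLp‖ₑ ^ 2 = ∫⁻ ξ, ‖g ξ‖ₑ ^ 2 :=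
    mp.lintegral_comp_emb emb (fun x => ‖g x‖ₑ ^ 2)
  rw [← R, ← P, ← lintegral_neg_eq_self, ← mp.lintegral_comp_emb emb]
  congr 1 with y
  rw [fourier_eq', ← mp.integral_comp emb]
  congr 3 with v
  rw [smul_eq_mul]
  congr 2
  simp [PiLp.inner_apply]
  ring

lemma aux_schwartz (h : 𝓢(Fin 2 → ℝ, ℂ)) :
    ∃ H : 𝓢(Fin 2 → ℝ, ℂ), ∀ ξ, H ξ = fourier2 (fun x => h x) ξ := by
  let e := PiLp.continuousLinearEquiv 2 ℝ (fun _ : Fin 2 => ℝ)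
  have mp := PiLp.volume_preserving_ofLp (Fin 2)
  have emb := (MeasurableEquiv.toLp 2 (Fin 2 → ℝ)).symm.measurableEmbedding
  refine ⟨SchwartzMap.compCLMOfContinuousLinearEquiv ℂ e.symm
    (𝓕 (SchwartzMap.compCLMOfContinuousLinearEquiv ℂ e h)), fun ξ => ?_⟩
  simp only [SchwartzMap.compCLMOfContinuousLinearEquiv_apply, Function.comp, SchwartzMap.fourier_coe]
  rw [fourier_eq', fourier2, ← mp.integral_comp emb]
  congr 1 with v
  simp [PiLp.inner_apply, smul_eq_mul, mul_comm, e]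
  rfl

/-- phase covector -/
noncomputable def auxA (ξ : Fin 2 → ℝ) : ((Fin 2 → ℝ) × ℝ) →L[ℝ] ℝ :=
  ∑ i : Fin 2, ξ i • ((ContinuousLinearMap.proj (R := ℝ) (φ := fun _ : Fin 2 => ℝ) i) ∘L
    ContinuousLinearMap.fst ℝ (Fin 2 → ℝ) ℝ)

lemma auxA_apply (ξ : Fin 2 → ℝ) (p : (Fin 2 → ℝ) × ℝ) :
    auxA ξ p = ∑ i : Fin 2, p.1 i * ξ i := by
  simp [auxA, mul_comm]

lemma auxA_cont : Continuous auxA := by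
  unfold auxA; fun_prop

lemma auxA_norm (ξ : Fin 2 → ℝ) : ‖auxA ξ‖ ≤ 2 * ‖ξ‖ := by
  apply ContinuousLinearMap.opNorm_le_bound _ (by positivity)
  intro p
  rw [auxA_apply]
  calc ‖∑ i : Fin 2, p.1 i * ξ i‖ ≤ ∑ i : Fin 2, ‖p‖ * ‖ξ‖ := by
        apply norm_sum_le_of_le
        intro i _
        rw [norm_mul]
        gcongr
        · exact (norm_le_pi_norm p.1 i).trans (norm_fst_le p)
        · exact norm_le_pi_norm ξ i
    _ = _ := by simp; ring

noncomputable def auxE (ξ : Fin 2 → ℝ) (p : (Fin 2 → ℝ) × ℝ) : ℂ :=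
  Complex.exp (((2 * Real.pi * ∑ i : Fin 2, p.1 i * ξ i : ℝ) : ℂ) * Complex.I)

lemma auxE_norm (ξ : Fin 2 → ℝ) (p : (Fin 2 → ℝ) × ℝ) : ‖auxE ξ p‖ = 1 :=
  Complex.norm_exp_ofReal_mul_I _

noncomputable def auxF' (χ : (Fin 2 → ℝ) → ℝ) (H : (Fin 2 → ℝ) → ℂ)
    (p : (Fin 2 → ℝ) × ℝ) (ξ : Fin 2 → ℝ) : ((Fin 2 → ℝ) × ℝ) →L[ℝ] ℂ :=
  (auxE ξ p * H ξ * (2 * Real.pi * Complex.I) * (χ (p.2 • ξ) : ℂ)) •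
      (Complex.ofRealCLM ∘L auxA ξ) +
  (auxE ξ p * H ξ * ((fderiv ℝ χ (p.2 • ξ) ξ : ℝ) : ℂ)) •
      (Complex.ofRealCLM ∘L ContinuousLinearMap.snd ℝ (Fin 2 → ℝ) ℝ)

lemma auxF'_hasFDerivAt (χ : (Fin 2 → ℝ) → ℝ) (hχ : ContDiff ℝ 1 χ) (H : (Fin 2 → ℝ) → ℂ)
    (p : (Fin 2 → ℝ) × ℝ) (ξ : Fin 2 → ℝ) :
    HasFDerivAt (fun p : (Fin 2 → ℝ) × ℝ =>
      Complex.exp (((2 * Real.pi * ∑ i : Fin 2, p.1 i * ξ i : ℝ) : ℂ) * Complex.I)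
      * (χ (p.2 • ξ) : ℂ) * H ξ) (auxF' χ H p ξ) p := by
  have h1 : HasFDerivAt (fun p : (Fin 2 → ℝ) × ℝ => auxE ξ p)
      ((auxE ξ p * (2 * Real.pi * Complex.I)) • (Complex.ofRealCLM ∘L auxA ξ)) p := by
    have := ((Complex.ofRealCLM ∘L auxA ξ).hasFDerivAt (x := p)).const_mul
      (2 * Real.pi * Complex.I)
    have := this.cexp
    have hE : (fun p : (Fin 2 → ℝ) × ℝ => auxE ξ p) =
        fun q => Complex.exp (2 * Real.pi * Complex.I * (Complex.ofRealCLM ∘L auxA ξ) q) := by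
      funext q
      simp only [auxE, ContinuousLinearMap.comp_apply, auxA_apply, Complex.ofRealCLM_apply]
      congr 1
      push_cast
      ring
    have hE' := congrFun hE p
    rw [← hE', smul_smul] at this
    rw [hE]
    exact this
  have h2 : HasFDerivAt (fun p : (Fin 2 → ℝ) × ℝ => (χ (p.2 • ξ) : ℂ))
      (((fderiv ℝ χ (p.2 • ξ) ξ : ℝ) : ℂ) •
      (Complex.ofRealCLM ∘L ContinuousLinearMap.snd ℝ (Fin 2 → ℝ) ℝ)) p := by
    have a1 : HasFDerivAt (fun p : (Fin 2 → ℝ) × ℝ => p.2 • ξ)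
        ((ContinuousLinearMap.snd ℝ (Fin 2 → ℝ) ℝ).smulRight ξ) p :=
      ((ContinuousLinearMap.snd ℝ (Fin 2 → ℝ) ℝ).smulRight ξ).hasFDerivAt
    have a2 := ((hχ.differentiable (by norm_num)) (p.2 • ξ)).hasFDerivAt
    have a3 := Complex.ofRealCLM.hasFDerivAt.comp p (a2.comp p a1)
    refine a3.congr_fderiv ?_
    refine ContinuousLinearMap.ext fun q => ?_
    simp [mul_comm]
  have h3 := (h1.mul h2).mul_const (H ξ)
  refine h3.congr_fderiv ?_
  refine ContinuousLinearMap.ext fun q => ?_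
  simp [auxF']
  ring

lemma auxE_cont (p : (Fin 2 → ℝ) × ℝ) : Continuous fun ξ => auxE ξ p := by
  unfold auxE; fun_prop

lemma aux_fd_cont (χ : (Fin 2 → ℝ) → ℝ) (hχ : ContDiff ℝ 1 χ) (z : ℝ) :
    Continuous fun ξ : Fin 2 → ℝ => fderiv ℝ χ (z • ξ) ξ := by
  have := hχ.continuous_fderiv (by norm_num)
  fun_prop

lemma auxF'_cont (χ : (Fin 2 → ℝ) → ℝ) (hχ : ContDiff ℝ 1 χ) (H : 𝓢(Fin 2 → ℝ, ℂ))
    (p : (Fin 2 → ℝ) × ℝ) : Continuous (auxF' χ H p) := by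
  unfold auxF'
  have h1 := auxE_cont p
  have h2 := aux_fd_cont χ hχ p.2
  have h3 := auxA_cont
  have h4 := hχ.continuous
  have h5 := H.continuous
  fun_prop

lemma auxF'_norm (χ : (Fin 2 → ℝ) → ℝ) (H : (Fin 2 → ℝ) → ℂ) (K : ℝ)
    (h1 : ∀ x, ‖χ x‖ ≤ K) (h2 : ∀ x, ‖fderiv ℝ χ x‖ ≤ K) (p : (Fin 2 → ℝ) × ℝ) (ξ : Fin 2 → ℝ) :
    ‖auxF' χ H p ξ‖ ≤ (4 * π * K + K) * (‖ξ‖ * ‖H ξ‖) := by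
  have hK : 0 ≤ K := (norm_nonneg _).trans (h1 0)
  have c1 : ‖Complex.ofRealCLM ∘L auxA ξ‖ ≤ 2 * ‖ξ‖ := by
    refine (ContinuousLinearMap.opNorm_comp_le _ _).trans ?_
    simpa using auxA_norm ξ
  have c2 : ‖Complex.ofRealCLM ∘L ContinuousLinearMap.snd ℝ (Fin 2 → ℝ) ℝ‖ ≤ 1 := by
    refine (ContinuousLinearMap.opNorm_comp_le _ _).trans ?_
    simp
  have c3 : ‖fderiv ℝ χ (p.2 • ξ) ξ‖ ≤ K * ‖ξ‖ :=
    (ContinuousLinearMap.le_opNorm _ _).trans (by gcongr; exact h2 _)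
  unfold auxF'
  refine (norm_add_le _ _).trans ?_
  rw [norm_smul, norm_smul, norm_mul, norm_mul (auxE ξ p * H ξ), norm_mul (auxE ξ p), norm_mul (auxE ξ p * H ξ),
    norm_mul (auxE ξ p), auxE_norm, Complex.norm_real, Complex.norm_real]
  have : ‖(2 * Real.pi * Complex.I : ℂ)‖ = 2 * π := by
    simp [abs_of_pos Real.pi_pos]
  rw [this]
  calc _ ≤ 1 * ‖H ξ‖ * (2 * π) * K * (2 * ‖ξ‖) + 1 * ‖H ξ‖ * (K * ‖ξ‖) * 1 := by
        gcongr; exact h1 _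
    _ = _ := by ring

lemma aux_int (H : 𝓢(Fin 2 → ℝ, ℂ)) : Integrable fun ξ => ‖ξ‖ * ‖H ξ‖ := by
  simpa using H.integrable_pow_mul volume 1

lemma aux_fderiv (χ : (Fin 2 → ℝ) → ℝ) (hχ : ContDiff ℝ 1 χ) (H : 𝓢(Fin 2 → ℝ, ℂ)) (K : ℝ)
    (h1 : ∀ x, ‖χ x‖ ≤ K) (h2 : ∀ x, ‖fderiv ℝ χ x‖ ≤ K) (h : (Fin 2 → ℝ) → ℂ)
    (hH : ∀ ξ, H ξ = fourier2 h ξ) (p v : (Fin 2 → ℝ) × ℝ) :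
    fderiv ℝ (smoothExt χ h) p v = ∫ ξ, auxF' χ H p ξ v := by
  have hi : Integrable (auxF' χ H p) := by
    refine ((aux_int H).const_mul (4 * π * K + K)).mono'
      (auxF'_cont χ hχ H p).aestronglyMeasurable (ae_of_all _ fun ξ => auxF'_norm χ H K h1 h2 p ξ)
  have hc : ∀ p : (Fin 2 → ℝ) × ℝ, Continuous fun ξ : Fin 2 → ℝ => auxE ξ p * (χ (p.2 • ξ) : ℂ) * H ξ := by
    intro p
    have h1 := auxE_cont p
    have h4 := hχ.continuous
    have h5 := H.continuous
    fun_prop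
  have hd : HasFDerivAt (smoothExt χ h) (∫ ξ, auxF' χ H p ξ) p := by
    unfold smoothExt
    simp_rw [← hH]
    apply hasFDerivAt_integral_of_dominated_of_fderiv_le (s := Set.univ)
      (bound := fun ξ => (4 * π * K + K) * (‖ξ‖ * ‖H ξ‖)) Filter.univ_mem
    · exact Filter.Eventually.of_forall fun q => (hc q).aestronglyMeasurable
    · refine (H.integrable.norm.const_mul K).mono' (hc p).aestronglyMeasurable
        (ae_of_all _ fun ξ => ?_)
      change ‖auxE ξ p * (χ (p.2 • ξ) : ℂ) * H ξ‖ ≤ _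
      rw [norm_mul, norm_mul, auxE_norm, one_mul, Complex.norm_real]
      gcongr
      exact h1 _
    · exact hi.1
    · exact ae_of_all _ fun ξ q _ => auxF'_norm χ H K h1 h2 q ξ
    · exact (aux_int H).const_mul _
    · exact ae_of_all _ fun ξ q _ => auxF'_hasFDerivAt χ hχ H q ξ
  rw [hd.fderiv, ContinuousLinearMap.integral_apply hi]

/-- Plancherel bound for one derivative -/
lemma aux_slice (H : 𝓢(Fin 2 → ℝ, ℂ)) (m : (Fin 2 → ℝ) → ℂ) (hm : Continuous m) (M : ℝ)
    (hM : ∀ ξ, ‖m ξ‖ ≤ M * ‖ξ‖) :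
    ∫⁻ y : Fin 2 → ℝ, ‖∫ ξ : Fin 2 → ℝ,
      Complex.exp (((2 * Real.pi * ∑ i : Fin 2, y i * ξ i : ℝ) : ℂ) * Complex.I) * (m ξ * H ξ)‖ₑ ^ 2
      = ∫⁻ ξ, ‖m ξ * H ξ‖ₑ ^ 2 := by
  have hb : ∀ ξ, ‖m ξ * H ξ‖ ≤ M * (‖ξ‖ * ‖H ξ‖) := fun ξ => by
    rw [norm_mul, ← mul_assoc]; gcongr; exact hM ξ
  have hc : Continuous fun ξ => m ξ * H ξ := hm.mul H.continuous
  have hi : Integrable fun ξ => m ξ * H ξ :=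
    ((aux_int H).const_mul M).mono' hc.aestronglyMeasurable (ae_of_all _ hb)
  apply aux_plancherel2 _ hi
  obtain ⟨D, hD⟩ := H.decay 1 0
  rw [memLp_two_iff_integrable_sq_norm hc.aestronglyMeasurable]
  refine (hi.norm.const_mul (|M| * D)).mono' (by fun_prop) (ae_of_all _ fun ξ => ?_)
  have := hD.2 ξ
  simp only [pow_one, norm_iteratedFDeriv_zero] at this
  rw [norm_pow, norm_norm, sq]
  gcongr
  refine (hb ξ).trans ?_
  gcongr
  exact le_abs_self M

lemma aux_zint (R M a b : ℝ) (ha : 0 ≤ a) :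
    ∫⁻ z : ℝ, ({z : ℝ | |z| * a ≤ R}.indicator (fun _ => ENNReal.ofReal (M ^ 2 * a ^ 2 * b ^ 2)) z)
      ≤ ENNReal.ofReal (2 * R * M ^ 2 * (a * b ^ 2)) := by
  rcases ha.eq_or_lt with rfl | ha
  · simp
  have hs : {z : ℝ | |z| * a ≤ R} = Set.Icc (-(R / a)) (R / a) := by
    ext z
    simp only [Set.mem_ofPred_eq, Set.mem_Icc]
    rw [← abs_le, le_div_iff₀ ha]
  rw [hs, lintegral_indicator_const measurableSet_Icc, Real.volume_Icc,
    ← ENNReal.ofReal_mul (by positivity)]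
  apply le_of_eq
  congr 1
  field_simp
  ring

lemma aux_key (χ : (Fin 2 → ℝ) → ℝ) (hχ : ContDiff ℝ 1 χ) (H : 𝓢(Fin 2 → ℝ, ℂ)) (K R : ℝ)
    (h1 : ∀ x, ‖χ x‖ ≤ K) (h2 : ∀ x, ‖fderiv ℝ χ x‖ ≤ K)
    (h : (Fin 2 → ℝ) → ℂ)
    (hH : ∀ ξ, H ξ = fourier2 h ξ) (v : (Fin 2 → ℝ) × ℝ)
    (m : ℝ → (Fin 2 → ℝ) → ℂ)
    (hm : ∀ z, Continuous (m z))
    (hv : ∀ p ξ, auxF' χ H p ξ v = auxE ξ p * (m p.2 ξ * H ξ))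
    (M : ℝ) (hM : ∀ z ξ, ‖m z ξ‖ ≤ M * ‖ξ‖) (hM0 : ∀ z ξ, R < ‖z • ξ‖ → m z ξ = 0) :
    ∫⁻ y : Fin 2 → ℝ, ∫⁻ z in Set.Iio (0 : ℝ), ‖fderiv ℝ (smoothExt χ h) (y, z) v‖ₑ ^ 2 ≤
      ∫⁻ ξ : Fin 2 → ℝ, ENNReal.ofReal (2 * R * M ^ 2 * (‖ξ‖ * ‖H ξ‖ ^ 2)) := by
  have hmeas : Measurable fun p : (Fin 2 → ℝ) × ℝ => ‖fderiv ℝ (smoothExt χ h) p v‖ₑ ^ 2 :=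
    (measurable_fderiv_apply_const ℝ (smoothExt χ h) v).enorm.pow_const 2
  rw [lintegral_lintegral_swap hmeas.aemeasurable]
  let S : Set (ℝ × (Fin 2 → ℝ)) := {q | |q.1| * ‖q.2‖ ≤ R}
  have hS : MeasurableSet S := by
    apply IsClosed.measurableSet
    exact isClosed_le (by fun_prop) (by fun_prop)
  let W : ℝ × (Fin 2 → ℝ) → ℝ≥0∞ :=
    S.indicator fun q => ENNReal.ofReal (M ^ 2 * ‖q.2‖ ^ 2 * ‖H q.2‖ ^ 2)
  have hW : Measurable W := by
    apply Measurable.indicator _ hS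
    have := H.continuous
    apply Measurable.ennreal_ofReal
    apply Continuous.measurable
    fun_prop
  calc _ ≤ ∫⁻ z : ℝ, ∫⁻ y : Fin 2 → ℝ, ‖fderiv ℝ (smoothExt χ h) (y, z) v‖ₑ ^ 2 :=
        setLIntegral_le_lintegral _ _
    _ = ∫⁻ z : ℝ, ∫⁻ ξ : Fin 2 → ℝ, ‖m z ξ * H ξ‖ₑ ^ 2 := by
        congr 1 with z
        rw [← aux_slice H (m z) (hm z) M (hM z)]
        congr 1 with y
        rw [aux_fderiv χ hχ H K h1 h2 h hH]
        simp_rw [hv]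
        rfl
    _ ≤ ∫⁻ z : ℝ, ∫⁻ ξ : Fin 2 → ℝ, W (z, ξ) := by
        apply lintegral_mono; intro z
        apply lintegral_mono; intro ξ
        by_cases hq : |z| * ‖ξ‖ ≤ R
        · have : W (z, ξ) = ENNReal.ofReal (M ^ 2 * ‖ξ‖ ^ 2 * ‖H ξ‖ ^ 2) :=
            Set.indicator_of_mem (s := S) hq _
          simp only [this]
          rw [← ofReal_norm, ← ENNReal.ofReal_pow (norm_nonneg _)]
          apply ENNReal.ofReal_le_ofReal
          rw [norm_mul, mul_pow, ← mul_pow M]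
          gcongr
          exact hM z ξ
        · have : m z ξ = 0 := by
            apply hM0
            rw [norm_smul]
            exact not_le.mp hq
          simp [this]
    _ = ∫⁻ ξ : Fin 2 → ℝ, ∫⁻ z : ℝ, W (z, ξ) := lintegral_lintegral_swap hW.aemeasurable
    _ ≤ _ := by
        apply lintegral_mono; intro ξ
        exact aux_zint R M ‖ξ‖ ‖H ξ‖ (norm_nonneg _)

/-- Estimate (3.1) of Proposition 3.1 in the case `s = 0`:
`∫_S |∇η|² ≤ C |h|²_{H^{1/2}(ℝ²)}`. -/
theorem smoothExt_gradient_estimate (χ : (Fin 2 → ℝ) → ℝ)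
    (hχ : ContDiff ℝ 1 χ) (hχs : HasCompactSupport χ) :
    ∃ C : ℝ, 0 < C ∧
      ∀ h : SchwartzMap (Fin 2 → ℝ) ℂ,
        (∫ y : Fin 2 → ℝ, ∫ z in Set.Iio (0 : ℝ),
            (‖fderiv ℝ (smoothExt χ (fun x => h x)) (y, z) (Pi.single 0 1, (0 : ℝ))‖ ^ 2
              + ‖fderiv ℝ (smoothExt χ (fun x => h x)) (y, z) (Pi.single 1 1, (0 : ℝ))‖ ^ 2
              + ‖fderiv ℝ (smoothExt χ (fun x => h x)) (y, z) ((0 : Fin 2 → ℝ), (1 : ℝ))‖ ^ 2))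
          ≤ C * ∫ ξ : Fin 2 → ℝ,
              Real.sqrt (1 + ∑ i : Fin 2, ξ i ^ 2) * ‖fourier2 (fun x => h x) ξ‖ ^ 2 := by
  obtain ⟨K1, hK1⟩ := hχs.exists_bound_of_continuous hχ.continuous
  have hcf : Continuous (fderiv ℝ χ) := hχ.continuous_fderiv (by norm_num)
  obtain ⟨K2, hK2⟩ := (hχs.fderiv (𝕜 := ℝ)).exists_bound_of_continuous hcf
  obtain ⟨R0, hR0⟩ := hχs.isCompact.isBounded.subset_closedBall (0 : Fin 2 → ℝ)
  obtain ⟨K, hKK⟩ : ∃ K, K = max K1 K2 := ⟨_, rfl⟩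
  obtain ⟨R, hRR⟩ : ∃ R, R = max R0 0 := ⟨_, rfl⟩
  have h1 : ∀ x, ‖χ x‖ ≤ K := fun x => (hK1 x).trans (hKK ▸ le_max_left _ _)
  have h2 : ∀ x, ‖fderiv ℝ χ x‖ ≤ K := fun x => (hK2 x).trans (hKK ▸ le_max_right _ _)
  have hR : 0 ≤ R := hRR ▸ le_max_right _ _
  have hK : 0 ≤ K := (norm_nonneg _).trans (h1 0)
  have hnt : ∀ x, R < ‖x‖ → x ∉ tsupport χ := by
    intro x hx hx'
    have := hR0 hx'
    rw [mem_closedBall_zero_iff] at this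
    exact absurd (this.trans (hRR ▸ le_max_left R0 0)) (not_le.mpr hx)
  have h3 : ∀ x, R < ‖x‖ → χ x = 0 := fun x hx => image_eq_zero_of_notMem_tsupport (hnt x hx)
  have h4 : ∀ x, R < ‖x‖ → fderiv ℝ χ x = 0 := fun x hx => by
    by_contra hne
    exact hnt x hx (support_fderiv_subset ℝ hne)
  obtain ⟨M, hMM⟩ : ∃ M, M = 2 * π * K + K := ⟨_, rfl⟩
  refine ⟨3 * (2 * R * M ^ 2) + 1, by positivity, fun h => ?_⟩
  obtain ⟨H, hH⟩ := aux_schwartz h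
  simp_rw [← hH]
  have k12 : ∀ i : Fin 2, ∫⁻ y : Fin 2 → ℝ, ∫⁻ z in Set.Iio (0 : ℝ),
      ‖fderiv ℝ (smoothExt χ (fun x => h x)) (y, z) (Pi.single i 1, (0 : ℝ))‖ₑ ^ 2 ≤
      ∫⁻ ξ : Fin 2 → ℝ, ENNReal.ofReal (2 * R * M ^ 2 * (‖ξ‖ * ‖H ξ‖ ^ 2)) := by
    intro i
    refine aux_key χ hχ H K R h1 h2 _ hH _
      (fun z ξ => (2 * Real.pi * Complex.I) * (χ (z • ξ) : ℂ) * (ξ i : ℂ)) ?_ ?_ M ?_ ?_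
    · intro z
      have := hχ.continuous
      fun_prop
    · intro p ξ
      have : auxA ξ (Pi.single i 1, (0 : ℝ)) = ξ i := by
        rw [auxA_apply]; simp [Pi.single_apply]
      simp only [auxF', add_apply, smul_apply,
        ContinuousLinearMap.comp_apply, this, Complex.ofRealCLM_apply, smul_eq_mul,
        ContinuousLinearMap.coe_snd', Complex.ofReal_zero, mul_zero, add_zero]
      ring
    · intro z ξ
      have e : ‖(2 * Real.pi * Complex.I : ℂ)‖ = 2 * π := by
        simp [abs_of_pos Real.pi_pos]
      rw [norm_mul, norm_mul, e, Complex.norm_real, Complex.norm_real]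
      have hM1 : 2 * π * ‖χ (z • ξ)‖ ≤ M := by
        calc 2 * π * ‖χ (z • ξ)‖ ≤ 2 * π * K := by gcongr; exact h1 _
          _ ≤ M := by linarith
      refine mul_le_mul hM1 ?_ (norm_nonneg _) (le_trans (by positivity) hM1)
      · exact norm_le_pi_norm ξ i
    · intro z ξ hz
      simp [h3 _ hz]
  have k3 : ∫⁻ y : Fin 2 → ℝ, ∫⁻ z in Set.Iio (0 : ℝ),
      ‖fderiv ℝ (smoothExt χ (fun x => h x)) (y, z) ((0 : Fin 2 → ℝ), (1 : ℝ))‖ₑ ^ 2 ≤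
      ∫⁻ ξ : Fin 2 → ℝ, ENNReal.ofReal (2 * R * M ^ 2 * (‖ξ‖ * ‖H ξ‖ ^ 2)) := by
    refine aux_key χ hχ H K R h1 h2 _ hH _
      (fun z ξ => ((fderiv ℝ χ (z • ξ) ξ : ℝ) : ℂ)) ?_ ?_ M ?_ ?_
    · intro z
      exact Complex.continuous_ofReal.comp (aux_fd_cont χ hχ z)
    · intro p ξ
      have : auxA ξ ((0 : Fin 2 → ℝ), (1 : ℝ)) = 0 := by
        rw [auxA_apply]; simp
      simp only [auxF', add_apply, smul_apply,
        ContinuousLinearMap.comp_apply, this, Complex.ofRealCLM_apply, smul_eq_mul,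
        ContinuousLinearMap.coe_snd', Complex.ofReal_zero, mul_zero, zero_add, Complex.ofReal_one]
      ring
    · intro z ξ
      rw [Complex.norm_real]
      refine (ContinuousLinearMap.le_opNorm _ _).trans ?_
      gcongr
      refine (h2 _).trans ?_
      have : 0 ≤ 2 * π * K := by positivity
      linarith
    · intro z ξ hz
      simp [h4 _ hz]
  have hms : ∀ v : (Fin 2 → ℝ) × ℝ, Measurable fun p : (Fin 2 → ℝ) × ℝ =>
      ‖fderiv ℝ (smoothExt χ (fun x => h x)) p v‖ₑ ^ 2 := fun v =>
    (measurable_fderiv_apply_const ℝ (smoothExt χ (fun x => h x)) v).enorm.pow_const 2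
  have hms1 : ∀ (v : (Fin 2 → ℝ) × ℝ) (y : Fin 2 → ℝ), Measurable fun z : ℝ =>
      ‖fderiv ℝ (smoothExt χ (fun x => h x)) (y, z) v‖ₑ ^ 2 := fun v y =>
    (hms v).comp measurable_prodMk_left
  have hms2 : ∀ v : (Fin 2 → ℝ) × ℝ, Measurable fun y : Fin 2 → ℝ => ∫⁻ z in Set.Iio (0 : ℝ),
      ‖fderiv ℝ (smoothExt χ (fun x => h x)) (y, z) v‖ₑ ^ 2 := fun v =>
    (hms v).lintegral_prod_right'
  -- integrability of the right-hand side
  obtain ⟨D, hD⟩ := H.decay 0 0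
  have hsq : ∀ ξ : Fin 2 → ℝ, √(1 + ∑ i : Fin 2, ξ i ^ 2) ≤ 1 + 2 * ‖ξ‖ := by
    intro ξ
    rw [Real.sqrt_le_left (by positivity), Fin.sum_univ_two]
    have a0 : ξ 0 ^ 2 ≤ ‖ξ‖ ^ 2 := by
      rw [← sq_abs (ξ 0)]; gcongr; exact norm_le_pi_norm ξ 0
    have a1 : ξ 1 ^ 2 ≤ ‖ξ‖ ^ 2 := by
      rw [← sq_abs (ξ 1)]; gcongr; exact norm_le_pi_norm ξ 1
    nlinarith [norm_nonneg ξ]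
  have hsq' : ∀ ξ : Fin 2 → ℝ, ‖ξ‖ ≤ √(1 + ∑ i : Fin 2, ξ i ^ 2) := by
    intro ξ
    rw [pi_norm_le_iff_of_nonneg (Real.sqrt_nonneg _)]
    intro i
    apply Real.le_sqrt_of_sq_le
    rw [Real.norm_eq_abs, sq_abs]
    have := Finset.single_le_sum (f := fun i : Fin 2 => ξ i ^ 2) (fun j _ => sq_nonneg _)
      (Finset.mem_univ i)
    linarith
  have hint : Integrable fun ξ : Fin 2 → ℝ => √(1 + ∑ i : Fin 2, ξ i ^ 2) * ‖H ξ‖ ^ 2 := by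
    have hi : Integrable fun ξ : Fin 2 → ℝ => D * (‖H ξ‖ + 2 * (‖ξ‖ * ‖H ξ‖)) :=
      (H.integrable.norm.add ((aux_int H).const_mul 2)).const_mul D
    have hcH := H.continuous
    refine hi.mono' (Continuous.aestronglyMeasurable (by fun_prop)) (ae_of_all _ fun ξ => ?_)
    have hd := hD.2 ξ
    simp only [pow_zero, one_mul, norm_iteratedFDeriv_zero] at hd
    rw [Real.norm_of_nonneg (by positivity)]
    calc _ ≤ (1 + 2 * ‖ξ‖) * (‖H ξ‖ * D) := by
          rw [sq]
          gcongr
          exact hsq ξ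
      _ = _ := by ring
  have hB : (∫⁻ ξ : Fin 2 → ℝ, ENNReal.ofReal (2 * R * M ^ 2 * (‖ξ‖ * ‖H ξ‖ ^ 2))) ≤
      ENNReal.ofReal (2 * R * M ^ 2 *
        ∫ ξ : Fin 2 → ℝ, √(1 + ∑ i : Fin 2, ξ i ^ 2) * ‖H ξ‖ ^ 2) := by
    rw [← integral_const_mul, ofReal_integral_eq_lintegral_ofReal (hint.const_mul _)
      (ae_of_all _ fun ξ => by simp only [Pi.zero_apply]; positivity)]
    apply lintegral_mono
    intro ξ
    apply ENNReal.ofReal_le_ofReal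
    gcongr
    exact hsq' ξ
  obtain ⟨J, hJ⟩ : ∃ J, J = ∫ ξ : Fin 2 → ℝ, √(1 + ∑ i : Fin 2, ξ i ^ 2) * ‖H ξ‖ ^ 2 := ⟨_, rfl⟩
  have hJ0 : 0 ≤ J := hJ ▸ integral_nonneg fun ξ => by positivity
  rw [← hJ] at hB ⊢
  have hfin : 0 ≤ 2 * R * M ^ 2 * J := by positivity
  refine (le_abs_self _).trans ?_
  rw [← Real.norm_eq_abs, ← ENNReal.ofReal_le_ofReal_iff (by positivity), ofReal_norm]
  refine (enorm_integral_le_lintegral_enorm _).trans ?_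
  refine (lintegral_mono fun y => enorm_integral_le_lintegral_enorm _).trans ?_
  have hen : ∀ a b c : ℂ, ‖(‖a‖ ^ 2 + ‖b‖ ^ 2 + ‖c‖ ^ 2 : ℝ)‖ₑ = ‖a‖ₑ ^ 2 + ‖b‖ₑ ^ 2 + ‖c‖ₑ ^ 2 := by
    intro a b c
    rw [Real.enorm_of_nonneg (by positivity), ENNReal.ofReal_add (by positivity) (by positivity),
      ENNReal.ofReal_add (by positivity) (by positivity)]
    simp [ENNReal.ofReal_pow]
  simp_rw [hen]
  calc _ = (∫⁻ y : Fin 2 → ℝ, ∫⁻ z in Set.Iio (0 : ℝ),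
      ‖fderiv ℝ (smoothExt χ (fun x => h x)) (y, z) (Pi.single 0 1, (0 : ℝ))‖ₑ ^ 2) +
      (∫⁻ y : Fin 2 → ℝ, ∫⁻ z in Set.Iio (0 : ℝ),
      ‖fderiv ℝ (smoothExt χ (fun x => h x)) (y, z) (Pi.single 1 1, (0 : ℝ))‖ₑ ^ 2) +
      (∫⁻ y : Fin 2 → ℝ, ∫⁻ z in Set.Iio (0 : ℝ),
      ‖fderiv ℝ (smoothExt χ (fun x => h x)) (y, z) ((0 : Fin 2 → ℝ), (1 : ℝ))‖ₑ ^ 2) := by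
        rw [← lintegral_add_right _ (hms2 _), ← lintegral_add_right _ (hms2 _)]
        congr 1 with y
        rw [← lintegral_add_right _ (hms1 _ y), ← lintegral_add_right _ (hms1 _ y)]
    _ ≤ ENNReal.ofReal (2 * R * M ^ 2 * J) + ENNReal.ofReal (2 * R * M ^ 2 * J) +
        ENNReal.ofReal (2 * R * M ^ 2 * J) :=
        add_le_add (add_le_add ((k12 0).trans hB) ((k12 1).trans hB)) (k3.trans hB)
    _ ≤ _ := by
        rw [← ENNReal.ofReal_add hfin hfin, ← ENNReal.ofReal_add (by positivity) hfin]
        apply ENNReal.ofReal_le_ofReal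
        linarith
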